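/- arXiv:1302.5902 — 2 statements merged into one kernel-verified Lean document; each statement's English description precedes it below -/
import Mathlib

section
/- Let ρ_AB be a density matrix on ℂ^{d_A} ⊗ ℂ^{d_B} with ρ_B positive definite. Define the Choi–Jamiołkowski map 𝓔(Y) = d_A · Tr_A[(Yᵀ ⊗ I_B) ρ_AB] on d_A × d_A matrices, let 𝓔† be its adjoint with respect to the Hilbert–Schmidt inner product ⟨X,Y⟩ = Tr[X†Y], and define the pretty good recovery map Λ^pg(X) = (1/d_A) · 𝓔†(ρ_B^{−1/2} X ρ_B^{−1/2}) on d_B × d_B matrices. Then ⟨Φ| (id_A ⊗ Λ^pg)(ρ_AB) |Φ⟩ = (1/d_A) · Tr[ρ̃_AB²], where |Φ⟩ = (1/√d_A) Σ_{j=1}^{d_A} |j⟩|j⟩ is the maximally entangled state; equivalently H₂(A|B) = −log₂[d_A · F^pg(A|B)] with F^pg(A|B) := ⟨Φ| (id_A ⊗ Λ^pg)(ρ_AB) |Φ⟩. -/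
open Matrix BigOperators ComplexOrder Kronecker

noncomputable section

/-- Partial trace over the first (A) tensor factor. -/
def ptraceA {dA dB : ℕ} (ρ : Matrix (Fin dA × Fin dB) (Fin dA × Fin dB) ℂ) :
    Matrix (Fin dB) (Fin dB) ℂ :=
  Matrix.of fun i j => ∑ a : Fin dA, ρ (a, i) (a, j)

/-- `ρ_B^v = Tr_A[(|v⟩⟨v| ⊗ I_B) ρ]`. -/
def condB {dA dB : ℕ} (ρ : Matrix (Fin dA × Fin dB) (Fin dA × Fin dB) ℂ)
    (v : Fin dA → ℂ) : Matrix (Fin dB) (Fin dB) ℂ :=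
  ptraceA (((vecMulVec v (star v)) ⊗ₖ (1 : Matrix (Fin dB) (Fin dB) ℂ)) * ρ)

/-- Real power of a Hermitian matrix, via the spectral decomposition (junk value `0`
on non-Hermitian matrices). -/
def mpow {n : Type*} [Fintype n] [DecidableEq n] (M : Matrix n n ℂ) (r : ℝ) :
    Matrix n n ℂ :=
  if h : M.IsHermitian then
    (h.eigenvectorUnitary : Matrix n n ℂ) *
      Matrix.diagonal (fun i => ((h.eigenvalues i ^ r : ℝ) : ℂ)) *
      star (h.eigenvectorUnitary : Matrix n n ℂ)
  else 0

/-- `ρ̃_AB = (I_A ⊗ ρ_B^{-1/4}) ρ_AB (I_A ⊗ ρ_B^{-1/4})`. -/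
def tildeRho {dA dB : ℕ} (ρ : Matrix (Fin dA × Fin dB) (Fin dA × Fin dB) ℂ) :
    Matrix (Fin dA × Fin dB) (Fin dA × Fin dB) ℂ :=
  ((1 : Matrix (Fin dA) (Fin dA) ℂ) ⊗ₖ mpow (ptraceA ρ) (-(1/4 : ℝ))) * ρ *
    ((1 : Matrix (Fin dA) (Fin dA) ℂ) ⊗ₖ mpow (ptraceA ρ) (-(1/4 : ℝ)))

/-- The pretty-good guessing probability term for a single basis vector `v`:
`Tr[ρ_B^{-1/2} ρ_B^v ρ_B^{-1/2} ρ_B^v]`. -/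
def pgTerm {dA dB : ℕ} (ρ : Matrix (Fin dA × Fin dB) (Fin dA × Fin dB) ℂ)
    (v : Fin dA → ℂ) : ℂ :=
  (mpow (ptraceA ρ) (-(1/2 : ℝ)) * condB ρ v * mpow (ptraceA ρ) (-(1/2 : ℝ)) *
    condB ρ v).trace

end

noncomputable section

/-- The Choi–Jamiołkowski map of `ρ_AB`: `𝓔(Y) = d_A · Tr_A[(Yᵀ ⊗ I_B) ρ_AB]`. -/
def choiMap {dA dB : ℕ} (ρ : Matrix (Fin dA × Fin dB) (Fin dA × Fin dB) ℂ)
    (Y : Matrix (Fin dA) (Fin dA) ℂ) : Matrix (Fin dB) (Fin dB) ℂ :=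
  (dA : ℂ) • ptraceA ((Yᵀ ⊗ₖ (1 : Matrix (Fin dB) (Fin dB) ℂ)) * ρ)

/-- Apply a superoperator `Λ` (from operators on `B` to operators on `C`) to the second
tensor factor: `(id_A ⊗ Λ)(ρ)`. -/
def idTensor {dA dB dC : ℕ}
    (Λ : Matrix (Fin dB) (Fin dB) ℂ → Matrix (Fin dC) (Fin dC) ℂ)
    (ρ : Matrix (Fin dA × Fin dB) (Fin dA × Fin dB) ℂ) :
    Matrix (Fin dA × Fin dC) (Fin dA × Fin dC) ℂ :=
  Matrix.of fun p q => Λ (Matrix.of fun b b' => ρ (p.1, b) (q.1, b')) p.2 q.2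

/-- The maximally entangled state `|Φ⟩ = (1/√d) Σ_j |j⟩|j⟩` as a vector. -/
def maxEnt (d : ℕ) : Fin d × Fin d → ℂ :=
  fun p => if p.1 = p.2 then ((Real.sqrt d : ℝ) : ℂ)⁻¹ else 0

/-!
Cut operators on `A ⊗ B` into their `B`-blocks `ρ_ij = (⟨i| ⊗ I) ρ (|j⟩ ⊗ I)`. Then
`𝓔(|i⟩⟨j|) = d_A ρ_ij`, so the adjoint relation reads `𝓔†(X)_ij = d_A Tr[ρ_ijᴴ X]`, while `|Φ⟩`
averages the `(i, j)` entries of the images `Λ(ρ_ij)`. With `S = ρ_B^{-1/2}` the recovery fidelity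
is thus `d_A⁻¹ ∑_ij Tr[ρ_ijᴴ S ρ_ij S] = d_A⁻¹ Tr[ρᴴ (I ⊗ S) ρ (I ⊗ S)]`. Splitting
`S = ρ_B^{-1/4} ρ_B^{-1/4}` turns this into `d_A⁻¹ Tr[ρ̃ᴴ ρ̃]`, and `ρ̃` is Hermitian when `ρ` is.
-/

section Block

variable {I J K L M N R : Type*}

/-- The block `(⟨i| ⊗ I) ρ (|j⟩ ⊗ I)` of an operator `ρ` between tensor products, whose index pairs
list the outer factor first. It is an entry of `(Matrix.comp I J K L R).symm ρ`. -/
def block (ρ : Matrix (I × K) (J × L) R) (i : I) (j : J) : Matrix K L R :=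
  ρ.submatrix (Prod.mk i) (Prod.mk j)

theorem block_conjTranspose [Star R] (ρ : Matrix (I × K) (J × L) R) (i : I) (j : J) :
    block ρᴴ j i = (block ρ i j)ᴴ :=
  rfl

theorem block_kronecker [Mul R] (A : Matrix I J R) (B : Matrix K L R) (i : I) (j : J) :
    block (A ⊗ₖ B) i j = A i j • B :=
  rfl

theorem block_mul [Fintype J] [Fintype L] [NonUnitalNonAssocSemiring R]
    (ρ : Matrix (I × K) (J × L) R) (σ : Matrix (J × L) (M × N) R) (i : I) (m : M) :
    block (ρ * σ) i m = ∑ j, block ρ i j * block σ j m := by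
  ext k n
  simp only [block, submatrix_apply, mul_apply, Matrix.sum_apply, Fintype.sum_prod_type]

theorem block_mul_one_kronecker [Fintype J] [DecidableEq J] [Fintype L] [Semiring R]
    (ρ : Matrix (I × K) (J × L) R) (B : Matrix L N R) (i : I) (j : J) :
    block (ρ * ((1 : Matrix J J R) ⊗ₖ B)) i j = block ρ i j * B := by
  rw [block_mul, Fintype.sum_eq_single j]
  · rw [block_kronecker, one_apply_eq, one_smul]
  · intro j' hj'
    rw [block_kronecker, one_apply_ne hj', zero_smul, Matrix.mul_zero]

theorem trace_eq_sum_trace_block [Fintype I] [Fintype K] [AddCommMonoid R]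
    (ρ : Matrix (I × K) (I × K) R) : ρ.trace = ∑ i, (block ρ i i).trace :=
  Fintype.sum_prod_type _

theorem trace_mul_eq_sum_trace_block_mul [Fintype I] [Fintype J] [Fintype K] [Fintype L]
    [NonUnitalNonAssocSemiring R] (ρ : Matrix (I × K) (J × L) R) (σ : Matrix (J × L) (I × K) R) :
    (ρ * σ).trace = ∑ i, ∑ j, (block ρ i j * block σ j i).trace := by
  simp only [trace_eq_sum_trace_block, block_mul, trace_sum]

end Block

section Mpow

variable {n : Type*} [Fintype n] [DecidableEq n]

theorem isHermitian_mpow (M : Matrix n n ℂ) (r : ℝ) : (mpow M r).IsHermitian := by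
  unfold mpow
  split_ifs with h
  · refine isHermitian_mul_mul_conjTranspose _ (isHermitian_diagonal_of_self_adjoint _ ?_)
    exact funext fun i => Complex.conj_ofReal _
  · exact isHermitian_zero

theorem mpow_mul_mpow {M : Matrix n n ℂ} (hM : M.PosDef) (r s : ℝ) :
    mpow M r * mpow M s = mpow M (r + s) := by
  simp only [mpow, dif_pos hM.isHermitian, ← Unitary.conjStarAlgAut_apply (S := ℂ), ← map_mul,
    diagonal_mul_diagonal, ← Complex.ofReal_mul, ← Real.rpow_add (hM.eigenvalues_pos _)]

end Mpow

section HilbertSchmidt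

variable {m n R : Type*} [Fintype m] [Fintype n] [NonAssocSemiring R] [StarRing R]

/-- `F` is adjoint to the superoperator `E` for the Hilbert–Schmidt inner product
`⟨X, Y⟩ = Tr[Xᴴ Y]`. -/
def IsHilbertSchmidtAdjoint (E : Matrix m m R → Matrix n n R)
    (F : Matrix n n R → Matrix m m R) : Prop :=
  ∀ X Y, ((F X)ᴴ * Y).trace = (Xᴴ * E Y).trace

theorem IsHilbertSchmidtAdjoint.apply_eq_trace [DecidableEq m] {E : Matrix m m R → Matrix n n R}
    {F : Matrix n n R → Matrix m m R} (h : IsHilbertSchmidtAdjoint E F) (X : Matrix n n R)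
    (i j : m) : F X i j = ((E (single i j 1))ᴴ * X).trace := by
  have h_single := congrArg star (h X (single i j 1))
  rw [← trace_conjTranspose (Xᴴ * _)] at h_single
  simpa [trace_mul_single] using h_single

end HilbertSchmidt

section MaximallyEntangled

variable {d : ℕ}

theorem star_maxEnt : star (maxEnt d) = maxEnt d := by
  ext p
  simp [maxEnt, apply_ite star]

theorem dotProduct_maxEnt (v : Fin d × Fin d → ℂ) :
    v ⬝ᵥ maxEnt d = (∑ i, v (i, i)) * ((Real.sqrt d : ℝ) : ℂ)⁻¹ := by
  simp [dotProduct, maxEnt, Fintype.sum_prod_type, Finset.sum_mul]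

theorem star_maxEnt_dotProduct_mulVec (M : Matrix (Fin d × Fin d) (Fin d × Fin d) ℂ) :
    star (maxEnt d) ⬝ᵥ M *ᵥ maxEnt d = (d : ℂ)⁻¹ * ∑ i, ∑ j, M (i, i) (j, j) := by
  have h_norm : ((Real.sqrt d : ℝ) : ℂ)⁻¹ * ((Real.sqrt d : ℝ) : ℂ)⁻¹ = (d : ℂ)⁻¹ := by
    rw [← mul_inv, ← Complex.ofReal_mul, Real.mul_self_sqrt d.cast_nonneg, Complex.ofReal_natCast]
  rw [star_maxEnt, dotProduct_comm, dotProduct_maxEnt]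
  simp only [mulVec, dotProduct_maxEnt]
  rw [← Finset.sum_mul, mul_assoc, h_norm, mul_comm]

end MaximallyEntangled

section Recovery

variable {dA dB : ℕ} (ρ : Matrix (Fin dA × Fin dB) (Fin dA × Fin dB) ℂ)

theorem ptraceA_eq_sum_block : ptraceA ρ = ∑ i, block ρ i i := by
  ext b b'
  simp only [ptraceA, block, of_apply, Matrix.sum_apply, submatrix_apply]

theorem choiMap_eq_sum_block (Y : Matrix (Fin dA) (Fin dA) ℂ) :
    choiMap ρ Y = (dA : ℂ) • ∑ i, ∑ j, Y i j • block ρ i j := by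
  simp only [choiMap, ptraceA_eq_sum_block, block_mul, block_kronecker, transpose_apply,
    Matrix.smul_mul, Matrix.one_mul]
  rw [Finset.sum_comm]

theorem choiMap_single (i j : Fin dA) :
    choiMap ρ (single i j 1) = (dA : ℂ) • block ρ i j := by
  simp [choiMap_eq_sum_block, single_apply, ite_and]

/-- The pretty good recovery map `Λ^pg(X) = d_A⁻¹ 𝓔†(ρ_B^{-1/2} X ρ_B^{-1/2})`, with `𝓔†` passed
as the argument `Eadj`. -/
def prettyGoodRecovery (Eadj : Matrix (Fin dB) (Fin dB) ℂ → Matrix (Fin dA) (Fin dA) ℂ)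
    (X : Matrix (Fin dB) (Fin dB) ℂ) : Matrix (Fin dA) (Fin dA) ℂ :=
  (dA : ℂ)⁻¹ •
    Eadj (mpow (ptraceA ρ) (-(1/2 : ℝ)) * X * mpow (ptraceA ρ) (-(1/2 : ℝ)))

variable {ρ} {Eadj : Matrix (Fin dB) (Fin dB) ℂ → Matrix (Fin dA) (Fin dA) ℂ}

theorem prettyGoodRecovery_apply (hEadj : IsHilbertSchmidtAdjoint (choiMap ρ) Eadj)
    (X : Matrix (Fin dB) (Fin dB) ℂ) (i j : Fin dA) :
    prettyGoodRecovery ρ Eadj X i j =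
      ((block ρ i j)ᴴ *
        (mpow (ptraceA ρ) (-(1/2 : ℝ)) * X * mpow (ptraceA ρ) (-(1/2 : ℝ)))).trace := by
  have hdA : (dA : ℂ) ≠ 0 := Nat.cast_ne_zero.mpr i.pos.ne'
  simp [prettyGoodRecovery, hEadj.apply_eq_trace, choiMap_single, hdA]

theorem maxEnt_prettyGoodRecovery_eq_trace (hEadj : IsHilbertSchmidtAdjoint (choiMap ρ) Eadj) :
    star (maxEnt dA) ⬝ᵥ idTensor (prettyGoodRecovery ρ Eadj) ρ *ᵥ maxEnt dA =
      (dA : ℂ)⁻¹ *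
        (ρᴴ * ((1 : Matrix (Fin dA) (Fin dA) ℂ) ⊗ₖ mpow (ptraceA ρ) (-(1/2 : ℝ))) *
          (ρ * ((1 : Matrix (Fin dA) (Fin dA) ℂ) ⊗ₖ mpow (ptraceA ρ) (-(1/2 : ℝ))))).trace := by
  have h_entry (i j : Fin dA) : idTensor (prettyGoodRecovery ρ Eadj) ρ (i, i) (j, j) =
      prettyGoodRecovery ρ Eadj (block ρ i j) i j := rfl
  simp only [star_maxEnt_dotProduct_mulVec, h_entry, prettyGoodRecovery_apply hEadj,
    trace_mul_eq_sum_trace_block_mul, block_mul_one_kronecker, block_conjTranspose]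
  rw [Finset.sum_comm]
  simp only [Matrix.mul_assoc]

theorem isHermitian_tildeRho (hρ : ρ.IsHermitian) : (tildeRho ρ).IsHermitian := by
  simp only [IsHermitian, tildeRho, conjTranspose_mul, conjTranspose_kronecker,
    conjTranspose_one, (isHermitian_mpow _ _).eq, hρ.eq, Matrix.mul_assoc]

theorem trace_conjTranspose_tildeRho_mul_tildeRho (hρB : (ptraceA ρ).PosDef) :
    ((tildeRho ρ)ᴴ * tildeRho ρ).trace =
      (ρᴴ * ((1 : Matrix (Fin dA) (Fin dA) ℂ) ⊗ₖ mpow (ptraceA ρ) (-(1/2 : ℝ))) *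
        (ρ * ((1 : Matrix (Fin dA) (Fin dA) ℂ) ⊗ₖ mpow (ptraceA ρ) (-(1/2 : ℝ))))).trace := by
  set Q := (1 : Matrix (Fin dA) (Fin dA) ℂ) ⊗ₖ mpow (ptraceA ρ) (-(1/4 : ℝ)) with hQ
  have hQ_herm : Qᴴ = Q := by
    rw [hQ, conjTranspose_kronecker, conjTranspose_one, (isHermitian_mpow _ _).eq]
  have hQ_sq : (1 : Matrix (Fin dA) (Fin dA) ℂ) ⊗ₖ mpow (ptraceA ρ) (-(1/2 : ℝ)) = Q * Q := by
    rw [hQ, ← mul_kronecker_mul, Matrix.one_mul, mpow_mul_mpow hρB]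
    norm_num
  calc ((tildeRho ρ)ᴴ * tildeRho ρ).trace
      = (Q * (ρᴴ * Q * Q * ρ * Q)).trace := by
        simp only [tildeRho, ← hQ, conjTranspose_mul, hQ_herm, Matrix.mul_assoc]
    _ = (ρᴴ * Q * Q * ρ * Q * Q).trace := trace_mul_comm _ _
    _ = _ := by simp only [hQ_sq, Matrix.mul_assoc]

theorem h2_pretty_good_recovery_general (hρB : (ptraceA ρ).PosDef)
    (hEadj : IsHilbertSchmidtAdjoint (choiMap ρ) Eadj) :
    star (maxEnt dA) ⬝ᵥ idTensor (prettyGoodRecovery ρ Eadj) ρ *ᵥ maxEnt dA =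
      (dA : ℂ)⁻¹ * ((tildeRho ρ)ᴴ * tildeRho ρ).trace := by
  rw [maxEnt_prettyGoodRecovery_eq_trace hEadj, trace_conjTranspose_tildeRho_mul_tildeRho hρB]

end Recovery

/-- operational meaning of the conditional Rényi 2-entropy via the
pretty good recovery map `Λ^pg(X) = (1/d_A) 𝓔†(ρ_B^{-1/2} X ρ_B^{-1/2})`:
`⟨Φ| (id_A ⊗ Λ^pg)(ρ_AB) |Φ⟩ = (1/d_A) Tr[ρ̃_AB²]`, i.e.
`H₂(A|B) = −log₂[d_A · F^pg(A|B)]`. -/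
theorem h2_pretty_good_recovery
    (dA dB : ℕ) (hdA : 1 ≤ dA) (hdB : 1 ≤ dB)
    (ρ : Matrix (Fin dA × Fin dB) (Fin dA × Fin dB) ℂ)
    (hρ : ρ.PosSemidef) (hρtr : ρ.trace = 1)
    (hρB : (ptraceA ρ).PosDef)
    (Eadj : Matrix (Fin dB) (Fin dB) ℂ → Matrix (Fin dA) (Fin dA) ℂ)
    (hEadj : ∀ (X : Matrix (Fin dB) (Fin dB) ℂ) (Y : Matrix (Fin dA) (Fin dA) ℂ),
      ((Eadj X)ᴴ * Y).trace = (Xᴴ * choiMap ρ Y).trace) :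
    star (maxEnt dA) ⬝ᵥ
        (idTensor (fun X => ((dA : ℂ))⁻¹ •
            Eadj (mpow (ptraceA ρ) (-(1/2 : ℝ)) * X * mpow (ptraceA ρ) (-(1/2 : ℝ)))) ρ)
          *ᵥ maxEnt dA
      = ((dA : ℂ))⁻¹ * (tildeRho ρ * tildeRho ρ).trace := by
  have h_general := h2_pretty_good_recovery_general hρB hEadj
  rwa [(isHermitian_tildeRho hρ.isHermitian).eq] at h_general

end
end

section
/- Let ρ_AB = Σ_j p_j · α_j ⊗ β_j be a separable density matrix on ℂ^{d_A} ⊗ ℂ^{d_B} (a finite convex combination, with p_j ≥ 0, Σ_j p_j = 1, α_j density matrices on ℂ^{d_A}, β_j density matrices on ℂ^{d_B}). Let {M_i}_{i∈I} be any finite family of d_A × d_B complex matrices with Σ_i M_i† M_i = I_{d_B} (the Kraus operators of a quantum channel from B to A'), and let |Φ⟩ = (1/√d_A) Σ_{j=1}^{d_A} |j⟩|j⟩ be the maximally entangled state on ℂ^{d_A} ⊗ ℂ^{d_A}. Then ⟨Φ| Σ_i (I_{d_A} ⊗ M_i) ρ_AB (I_{d_A} ⊗ M_i)† |Φ⟩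 ≤ 1/d_A. In particular, for separable states the conditional min-entropy H_min(A|B) = −log₂[d_A · max_Λ ⟨Φ|(id_A ⊗ Λ)(ρ_AB)|Φ⟩] is nonnegative. -/
open Matrix BigOperators ComplexOrder Kronecker

noncomputable section

/-!
A positive semidefinite `B` satisfies `B ≤ tr B • 1`, so a product state satisfies
`A ⊗ B ≤ tr B • (A ⊗ 1)`: this is the reduction criterion on products. The reduced states of
`|Φ⟩` are maximally mixed, so `⟨Φ| A ⊗ 1 |Φ⟩ = tr A / d`, and hence `⟨Φ| σ |Φ⟩ ≤ tr σ / d` on the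
whole cone spanned by products. A channel whose Kraus operators are products `Nᵢ ⊗ Mᵢ` preserves
both this cone and the trace.
-/

section PosSemidef

open scoped MatrixOrder

variable {𝕜 m n : Type*} [RCLike 𝕜]

theorem le_trace_smul_one_of_posSemidef [Fintype n] [DecidableEq n] {B : Matrix n n 𝕜}
    (hB : B.PosSemidef) : B ≤ B.trace • 1 := by
  have heig (i : n) : hB.isHermitian.eigenvalues i ≤ ∑ k, hB.isHermitian.eigenvalues k :=
    Finset.single_le_sum (fun k _ => hB.eigenvalues_nonneg k) (Finset.mem_univ i)
  have hle : B ≤ algebraMap ℝ _ (∑ k, hB.isHermitian.eigenvalues k) := by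
    refine le_algebraMap_of_spectrum_le (fun x hx => ?_) hB.isHermitian.isSelfAdjoint
    obtain ⟨i, rfl⟩ := hB.isHermitian.spectrum_real_eq_range_eigenvalues ▸ hx
    exact heig i
  rwa [IsScalarTower.algebraMap_apply ℝ 𝕜, RCLike.algebraMap_eq_ofReal, RCLike.ofReal_sum,
    ← hB.isHermitian.trace_eq_sum_eigenvalues, Algebra.algebraMap_eq_smul_one] at hle

theorem kronecker_le_trace_smul_kronecker_one [Finite m] [Fintype n] [DecidableEq n]
    {A : Matrix m m 𝕜} {B : Matrix n n 𝕜} (hA : A.PosSemidef) (hB : B.PosSemidef) :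
    A ⊗ₖ B ≤ B.trace • (A ⊗ₖ 1) := by
  have hsub : B.trace • (A ⊗ₖ 1) - A ⊗ₖ B = A ⊗ₖ (B.trace • 1 - B) := by
    rw [← kronecker_smul]
    exact (map_sub (kroneckerBilinear (R := 𝕜) A) _ _).symm
  rw [le_iff, hsub]
  exact hA.kronecker (le_iff.mp (le_trace_smul_one_of_posSemidef hB))

theorem star_dotProduct_mulVec_le_of_le [Fintype n] {A B : Matrix n n 𝕜} (h : A ≤ B)
    (v : n → 𝕜) : star v ⬝ᵥ A *ᵥ v ≤ star v ⬝ᵥ B *ᵥ v := by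
  have hnonneg := (le_iff.mp h).dotProduct_mulVec_nonneg v
  rwa [sub_mulVec, dotProduct_sub, sub_nonneg] at hnonneg

end PosSemidef

theorem trace_sum_mul_mul_conjTranspose {R I m n : Type*} [CommSemiring R] [StarRing R]
    [Fintype I] [Fintype m] [Fintype n] [DecidableEq n] {K : I → Matrix m n R}
    (hK : ∑ i, (K i)ᴴ * K i = 1) (ρ : Matrix n n R) :
    (∑ i, K i * ρ * (K i)ᴴ).trace = ρ.trace := by
  calc (∑ i, K i * ρ * (K i)ᴴ).trace = ((∑ i, (K i)ᴴ * K i) * ρ).trace := by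
        simp only [trace_sum, Matrix.sum_mul, trace_mul_cycle (K _) ρ]
    _ = ρ.trace := by rw [hK, Matrix.one_mul]

theorem sum_conjTranspose_mul_self_one_kronecker {R I l m n : Type*} [CommSemiring R] [StarRing R]
    [Fintype I] [Fintype l] [DecidableEq l] [Fintype m] [DecidableEq n]
    {M : I → Matrix m n R} (hM : ∑ i, (M i)ᴴ * M i = 1) :
    ∑ i, ((1 : Matrix l l R) ⊗ₖ M i)ᴴ * ((1 : Matrix l l R) ⊗ₖ M i) = 1 := by
  simp only [conjTranspose_kronecker, ← mul_kronecker_mul, conjTranspose_one, Matrix.one_mul]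
  rw [← one_kronecker_one, ← hM]
  exact (map_sum (kroneckerBilinear (R := R) (1 : Matrix l l R)) _ _).symm

section Separable

/-- The separable (unnormalized) states on `ℂ^m ⊗ ℂ^n`, to which the singlet fraction
bound applies: finite sums of products of positive semidefinite matrices, the nonnegative weights
of a convex combination being absorbed into the factors. -/
def separableCone (m n : Type*) : AddSubmonoid (Matrix (m × n) (m × n) ℂ) :=
  AddSubmonoid.closure
    {ρ | ∃ (A : Matrix m m ℂ) (B : Matrix n n ℂ), A.PosSemidef ∧ B.PosSemidef ∧ ρ = A ⊗ₖ B}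

variable {m n : Type*}

theorem kronecker_mem_separableCone {A : Matrix m m ℂ} {B : Matrix n n ℂ}
    (hA : A.PosSemidef) (hB : B.PosSemidef) : A ⊗ₖ B ∈ separableCone m n :=
  AddSubmonoid.subset_closure ⟨A, B, hA, hB, rfl⟩

theorem sum_smul_kronecker_mem_separableCone {J : Type*} [Fintype J] {p : J → ℝ}
    {α : J → Matrix m m ℂ} {β : J → Matrix n n ℂ} (hp : ∀ j, 0 ≤ p j)
    (hα : ∀ j, (α j).PosSemidef) (hβ : ∀ j, (β j).PosSemidef) :
    ∑ j, (p j : ℂ) • (α j ⊗ₖ β j) ∈ separableCone m n := by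
  refine sum_mem fun j _ => ?_
  rw [← smul_kronecker]
  exact kronecker_mem_separableCone ((hα j).smul (Complex.zero_le_real.mpr (hp j))) (hβ j)

theorem trace_sum_smul_kronecker [Fintype m] [Fintype n] {J : Type*} [Fintype J] {p : J → ℝ}
    {α : J → Matrix m m ℂ} {β : J → Matrix n n ℂ} (hα : ∀ j, (α j).trace = 1)
    (hβ : ∀ j, (β j).trace = 1) :
    (∑ j, (p j : ℂ) • (α j ⊗ₖ β j)).trace = ((∑ j, p j : ℝ) : ℂ) := by
  simp only [trace_sum, trace_smul, trace_kronecker, hα, hβ, mul_one, smul_eq_mul,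
    Complex.ofReal_sum]

theorem kronecker_mul_mul_conjTranspose_mem_separableCone {m' n' : Type*} [Finite m'] [Finite n']
    [Fintype m] [Fintype n] {ρ : Matrix (m × n) (m × n) ℂ} (hρ : ρ ∈ separableCone m n)
    (N : Matrix m' m ℂ) (M : Matrix n' n ℂ) :
    (N ⊗ₖ M) * ρ * (N ⊗ₖ M)ᴴ ∈ separableCone m' n' := by
  induction hρ using AddSubmonoid.closure_induction with
  | mem ρ hρ =>
    obtain ⟨A, B, hA, hB, rfl⟩ := hρ
    rw [conjTranspose_kronecker, ← mul_kronecker_mul, ← mul_kronecker_mul]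
    exact kronecker_mem_separableCone (hA.mul_mul_conjTranspose_same N)
      (hB.mul_mul_conjTranspose_same M)
  | zero => simp only [Matrix.mul_zero, Matrix.zero_mul, zero_mem]
  | add ρ σ _ _ hρ hσ => simpa only [Matrix.mul_add, Matrix.add_mul] using add_mem hρ hσ

end Separable

theorem star_maxEnt_dotProduct_kronecker_one_mulVec {d : ℕ} (A : Matrix (Fin d) (Fin d) ℂ) :
    star (maxEnt d) ⬝ᵥ (A ⊗ₖ (1 : Matrix (Fin d) (Fin d) ℂ)) *ᵥ maxEnt d = A.trace / d := by
  have hsq : ((√d : ℝ) : ℂ)⁻¹ * ((√d : ℝ) : ℂ)⁻¹ = (d : ℂ)⁻¹ := by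
    rw [← mul_inv, ← Complex.ofReal_mul, Real.mul_self_sqrt d.cast_nonneg, Complex.ofReal_natCast]
  calc star (maxEnt d) ⬝ᵥ (A ⊗ₖ (1 : Matrix (Fin d) (Fin d) ℂ)) *ᵥ maxEnt d
      = ∑ i, ((√d : ℝ) : ℂ)⁻¹ * (A i i * ((√d : ℝ) : ℂ)⁻¹) := by
        simp [dotProduct, mulVec, maxEnt, Fintype.sum_prod_type, apply_ite star, one_apply]
    _ = ∑ i, A i i * (d : ℂ)⁻¹ := Finset.sum_congr rfl fun i _ => by rw [mul_left_comm, hsq]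
    _ = A.trace / d := by simp only [Matrix.trace, diag_apply, div_eq_mul_inv, Finset.sum_mul]

theorem star_maxEnt_dotProduct_mulVec_le {d : ℕ} {σ : Matrix (Fin d × Fin d) (Fin d × Fin d) ℂ}
    (hσ : σ ∈ separableCone (Fin d) (Fin d)) :
    star (maxEnt d) ⬝ᵥ σ *ᵥ maxEnt d ≤ σ.trace / d := by
  induction hσ using AddSubmonoid.closure_induction with
  | mem σ hσ =>
    obtain ⟨A, B, hA, hB, rfl⟩ := hσ
    calc star (maxEnt d) ⬝ᵥ (A ⊗ₖ B) *ᵥ maxEnt d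
        ≤ star (maxEnt d) ⬝ᵥ (B.trace • (A ⊗ₖ 1)) *ᵥ maxEnt d :=
          star_dotProduct_mulVec_le_of_le (kronecker_le_trace_smul_kronecker_one hA hB) _
      _ = B.trace * (A.trace / d) := by
          rw [smul_mulVec, dotProduct_smul, star_maxEnt_dotProduct_kronecker_one_mulVec,
            smul_eq_mul]
      _ = (A ⊗ₖ B).trace / d := by rw [trace_kronecker]; ring
  | zero => simp only [zero_mulVec, dotProduct_zero, trace_zero, zero_div, le_refl]
  | add σ τ _ _ hσ hτ =>
    simpa only [add_mulVec, dotProduct_add, trace_add, add_div] using add_le_add hσ hτ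

theorem separable_singlet_fraction_le_general {m n I : Type*} [Fintype m] [Fintype n]
    [DecidableEq m] [DecidableEq n] [Fintype I] {d : ℕ} {ρ : Matrix (m × n) (m × n) ℂ}
    (hρ : ρ ∈ separableCone m n) {N : I → Matrix (Fin d) m ℂ} {M : I → Matrix (Fin d) n ℂ}
    (hNM : ∑ i, (N i ⊗ₖ M i)ᴴ * (N i ⊗ₖ M i) = 1) :
    star (maxEnt d) ⬝ᵥ (∑ i, (N i ⊗ₖ M i) * ρ * (N i ⊗ₖ M i)ᴴ) *ᵥ maxEnt d ≤ ρ.trace / d := by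
  rw [← trace_sum_mul_mul_conjTranspose hNM ρ]
  exact star_maxEnt_dotProduct_mulVec_le
    (sum_mem fun i _ => kronecker_mul_mul_conjTranspose_mem_separableCone hρ (N i) (M i))

/-- for a separable state `ρ_AB = Σ_j p_j α_j ⊗ β_j` and any quantum
channel from `B` to `A'` with Kraus operators `M_i` (`Σ_i M_i† M_i = I`), the singlet
fraction obtained by applying the channel to `B` is at most `1/d_A`:
`⟨Φ| Σ_i (I ⊗ M_i) ρ_AB (I ⊗ M_i)† |Φ⟩ ≤ 1/d_A`. Hence `H_min(A|B) ≥ 0` for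
separable states. -/
theorem separable_singlet_fraction_le
    (dA dB : ℕ) (hdA : 1 ≤ dA) (hdB : 1 ≤ dB)
    (J : Type) [Fintype J]
    (p : J → ℝ) (hp : ∀ j, 0 ≤ p j) (hpsum : ∑ j, p j = 1)
    (α : J → Matrix (Fin dA) (Fin dA) ℂ)
    (hα : ∀ j, (α j).PosSemidef) (hαtr : ∀ j, (α j).trace = 1)
    (β : J → Matrix (Fin dB) (Fin dB) ℂ)
    (hβ : ∀ j, (β j).PosSemidef) (hβtr : ∀ j, (β j).trace = 1)
    (ρ : Matrix (Fin dA × Fin dB) (Fin dA × Fin dB) ℂ)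
    (hρ : ρ = ∑ j, ((p j : ℂ)) • ((α j) ⊗ₖ (β j)))
    (I : Type) [Fintype I]
    (M : I → Matrix (Fin dA) (Fin dB) ℂ)
    (hM : ∑ i, (M i)ᴴ * M i = (1 : Matrix (Fin dB) (Fin dB) ℂ)) :
    (star (maxEnt dA) ⬝ᵥ
        (∑ i, ((1 : Matrix (Fin dA) (Fin dA) ℂ) ⊗ₖ M i) * ρ *
          ((1 : Matrix (Fin dA) (Fin dA) ℂ) ⊗ₖ M i)ᴴ) *ᵥ maxEnt dA).re
      ≤ 1 / dA := by
  subst hρ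
  have hle := separable_singlet_fraction_le_general
    (sum_smul_kronecker_mem_separableCone hp hα hβ) (sum_conjTranspose_mul_self_one_kronecker hM)
  rw [trace_sum_smul_kronecker hαtr hβtr, hpsum] at hle
  simpa using (Complex.le_def.mp hle).1

end
end
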